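/- There exists N₀ ∈ ℕ such that for all n ≥ N₀ and all natural numbers t ≥ (1 + 4·log log n / log n)·(2n / log n), the following holds: Σ_{d=1}^{n} C(n,d) · c(d)^t ≤ n · 2^{−3t/4}, where c(d) := C(d, d/2) · 2^{−d} if d is even and c(d) := 0 if d is odd. -/

import Mathlib

lemma cb_sq (m : ℕ) : (m.centralBinom : ℝ) ^ 2 * (2 * m + 1) ≤ 16 ^ m := by
  induction m with
  | zero => simp
  | succ m ih =>
    have h : ((m : ℝ) + 1) * ((m + 1).centralBinom : ℝ) = 2 * (2 * m + 1) * (m.centralBinom : ℝ) := by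
      exact_mod_cast Nat.succ_mul_centralBinom_succ m
    have hm : (0 : ℝ) < (m : ℝ) + 1 := by positivity
    have h2 : ((m : ℝ) + 1) ^ 2 * (((m + 1).centralBinom : ℝ) ^ 2 * (2 * ((m : ℝ) + 1) + 1))
        ≤ ((m : ℝ) + 1) ^ 2 * 16 ^ (m + 1) := by
      calc _ = (((m : ℝ) + 1) * ((m + 1).centralBinom : ℝ)) ^ 2 * (2 * m + 3) := by ring
        _ = ((m.centralBinom : ℝ) ^ 2 * (2 * m + 1)) * (4 * (2 * m + 1) * (2 * m + 3)) := by
            rw [h]; ring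
        _ ≤ 16 ^ m * (4 * (2 * m + 1) * (2 * m + 3)) := by gcongr
        _ ≤ 16 ^ m * (16 * ((m : ℝ) + 1) ^ 2) := mul_le_mul_of_nonneg_left (by nlinarith) (by positivity)
        _ = _ := by ring
    push_cast
    exact le_of_mul_le_mul_left h2 (by positivity)

lemma cb_half (m : ℕ) (hm : 1 ≤ m) : (m.centralBinom : ℝ) * 2 ≤ 4 ^ m := by
  rcases Nat.lt_or_ge 1 m with h | h
  · have h1 := cb_sq m
    have h2 : (2 : ℝ) ≤ m := by exact_mod_cast h
    have h3 : ((m.centralBinom : ℝ) * 2) ^ 2 ≤ (4 ^ m) ^ 2 := by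
      rw [← pow_mul, mul_comm m 2, pow_mul]
      norm_num
      nlinarith [sq_nonneg (m.centralBinom : ℝ)]
    exact le_of_sq_le_sq h3 (by positivity)
  · have : m = 1 := by omega
    subst this
    norm_num [Nat.centralBinom, Nat.choose]

lemma c_bounds (d : ℕ) (hd : 1 ≤ d) (he : Even d) :
    (d.choose (d / 2) : ℝ) * (2 : ℝ) ^ (-(d : ℝ)) ≤ 2 ^ (-1 : ℝ) ∧
    (d.choose (d / 2) : ℝ) * (2 : ℝ) ^ (-(d : ℝ)) ≤ 2 ^ (-(Real.logb 2 d / 2)) := by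
  obtain ⟨m, rfl⟩ := he
  have hm : 1 ≤ m := by omega
  have hm' : (1 : ℝ) ≤ m := by exact_mod_cast hm
  have e : ((m + m).choose ((m + m) / 2) : ℝ) = m.centralBinom := by
    rw [← two_mul, Nat.centralBinom]; simp
  have e2 : (2 : ℝ) ^ (-((m + m : ℕ) : ℝ)) = (4 ^ m)⁻¹ := by
    rw [Real.rpow_neg (by norm_num), Real.rpow_natCast, ← two_mul, pow_mul]; norm_num
  rw [e, e2]
  have h4 : (0 : ℝ) < 4 ^ m := by positivity
  constructor
  · have := cb_half m hm
    rw [Real.rpow_neg_one, ← div_eq_mul_inv, div_le_iff₀ h4]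
    linarith
  · have hdpos : (0 : ℝ) < ((m + m : ℕ) : ℝ) := by push_cast; linarith
    refine le_of_sq_le_sq ?_ (by positivity)
    rw [← Real.rpow_natCast (2 ^ (-(Real.logb 2 _ / 2))), ← Real.rpow_mul (by norm_num)]
    have : -(Real.logb 2 ((m + m : ℕ) : ℝ) / 2) * ((2 : ℕ) : ℝ) = -Real.logb 2 ((m + m : ℕ) : ℝ) := by
      push_cast; ring
    rw [this, Real.rpow_neg (by norm_num), Real.rpow_logb (by norm_num) (by norm_num) hdpos,
      ← div_eq_mul_inv, div_pow, ← pow_mul, mul_comm m 2, pow_mul]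
    norm_num
    have h1 := cb_sq m
    rw [div_le_iff₀ (by positivity), ← div_eq_inv_mul, le_div_iff₀ (by positivity)]
    nlinarith [sq_nonneg (m.centralBinom : ℝ)]

lemma term_bound (n d t : ℕ) (L K : ℝ) (hn : 1 ≤ n) (hL : L = Real.logb 2 n)
    (hK : K = Real.logb 2 L) (hK5 : 5 ≤ K) (hLK : 8 * K ^ 2 ≤ L)
    (ht : (1 + 4 * K / L) * (2 * n / L) ≤ (t : ℝ)) (hd : 1 ≤ d) (he : Even d) :
    (n.choose d : ℝ) * ((d.choose (d / 2) : ℝ) * (2 : ℝ) ^ (-(d : ℝ))) ^ t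
      ≤ (2 : ℝ) ^ (-(3 * (t : ℝ) / 4)) := by
  obtain ⟨c1, c2⟩ := c_bounds d hd he
  have hLpos : 0 < L := by nlinarith
  have hnpos : (0 : ℝ) < n := by exact_mod_cast hn
  have hdpos : (0 : ℝ) < d := by exact_mod_cast hd
  have hn2 : (2 : ℝ) ^ L = n := by rw [hL, Real.rpow_logb (by norm_num) (by norm_num) hnpos]
  have hL2 : (2 : ℝ) ^ K = L := by rw [hK, Real.rpow_logb (by norm_num) (by norm_num) hLpos]
  -- combine exponents
  have key : ∀ a b : ℝ, (n.choose d : ℝ) ≤ 2 ^ a →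
      (d.choose (d / 2) : ℝ) * (2 : ℝ) ^ (-(d : ℝ)) ≤ 2 ^ b → a + b * t ≤ -(3 * (t : ℝ) / 4) →
      (n.choose d : ℝ) * ((d.choose (d / 2) : ℝ) * (2 : ℝ) ^ (-(d : ℝ))) ^ t
      ≤ (2 : ℝ) ^ (-(3 * (t : ℝ) / 4)) := by
    intro a b h1 h2 h3
    calc _ ≤ (2 : ℝ) ^ a * ((2 : ℝ) ^ b) ^ t := by gcongr
      _ = (2 : ℝ) ^ (a + b * t) := by
        rw [← Real.rpow_natCast, ← Real.rpow_mul (by norm_num), ← Real.rpow_add (by norm_num)]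
      _ ≤ _ := Real.rpow_le_rpow_of_exponent_le (by norm_num) h3
  rcases le_or_gt (d : ℝ) (n / (2 * L ^ 2)) with h | h
  · refine key (L * d) (-1) ?_ c1 ?_
    · rw [Real.rpow_mul (by norm_num), hn2, Real.rpow_natCast]
      exact_mod_cast Nat.choose_le_pow n d
    · have h1 : L * d ≤ n / (2 * L) := by
        calc L * d ≤ L * (n / (2 * L ^ 2)) := by gcongr
          _ = _ := by field_simp
      have h2 : 2 * n / L ≤ (t : ℝ) := by
        refine le_trans ?_ ht
        have : 0 ≤ 4 * K / L := by positivity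
        have : 0 ≤ 2 * n / L := by positivity
        nlinarith
      have h3 : (n : ℝ) / (2 * L) = (2 * n / L) / 4 := by field_simp; norm_num
      linarith
  · refine key n (-(Real.logb 2 d / 2)) ?_ c2 ?_
    · rw [Real.rpow_natCast]
      exact_mod_cast Nat.choose_le_two_pow n d
    · have hd2 : L - 1 - 2 * K ≤ Real.logb 2 d := by
        rw [Real.le_logb_iff_rpow_le (by norm_num) hdpos]
        refine le_trans (le_of_eq ?_) h.le
        rw [Real.rpow_sub (by norm_num), Real.rpow_sub (by norm_num), hn2, mul_comm 2 K,
          Real.rpow_mul (by norm_num), hL2]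
        norm_num
        field_simp
      have h0 : 0 ≤ L - 2 * K - 5 / 2 := by nlinarith
      have h1 : (1 + 4 * K / L) * (2 * n / L) * (L - 2 * K - 5 / 2) ≤
          t * (Real.logb 2 d - 3 / 2) := by
        apply mul_le_mul ht (by linarith) h0 (by positivity)
      have h2 : 2 * (n : ℝ) ≤ (1 + 4 * K / L) * (2 * n / L) * (L - 2 * K - 5 / 2) := by
        have e : (1 + 4 * K / L) * (2 * n / L) * (L - 2 * K - 5 / 2) =
          2 * n * ((L + 4 * K) * (L - 2 * K - 5 / 2)) / L ^ 2 := by field_simp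
        rw [e, le_div_iff₀ (by positivity)]
        have : L ^ 2 ≤ (L + 4 * K) * (L - 2 * K - 5 / 2) := by
          nlinarith [mul_le_mul_of_nonneg_right hLK (by linarith : 0 ≤ 2 * K - 5 / 2)]
        gcongr
      linarith

lemma eventually_ok : ∃ N₀ : ℕ, ∀ n : ℕ, n ≥ N₀ → 1 ≤ n ∧
    5 ≤ Real.logb 2 (Real.logb 2 n) ∧ 8 * (Real.logb 2 (Real.logb 2 n)) ^ 2 ≤ Real.logb 2 n := by
  have hl : Filter.Tendsto (Real.logb 2) Filter.atTop Filter.atTop :=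
    Real.tendsto_logb_atTop (by norm_num)
  have hL : Filter.Tendsto (fun n : ℕ => Real.logb 2 (n : ℝ)) Filter.atTop Filter.atTop :=
    hl.comp tendsto_natCast_atTop_atTop
  have hlog2 : 0 < Real.log 2 := Real.log_pos (by norm_num)
  have h1 := (Real.isLittleO_pow_log_id_atTop (n := 2)).bound
    (c := Real.log 2 ^ 2 / 8) (by positivity)
  have h2 : ∀ᶠ x : ℝ in Filter.atTop, 8 * (Real.logb 2 x) ^ 2 ≤ x := by
    filter_upwards [h1, Filter.eventually_ge_atTop 0] with x hx hx0
    simp only [Real.norm_eq_abs, id, abs_of_nonneg hx0, abs_of_nonneg (sq_nonneg (Real.log x))] at hx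
    rw [Real.logb, div_pow, ← mul_div_assoc, div_le_iff₀ (by positivity)]
    linarith
  have h3 := (Filter.eventually_ge_atTop 1).and
    (((hl.comp hL).eventually_ge_atTop 5).and (hL.eventually h2))
  obtain ⟨N, hN⟩ := Filter.eventually_atTop.1 h3
  exact ⟨N, fun n hn => hN n hn⟩

/-- For sufficiently large `n` and `t ≥ (1 + 4 log log n / log n)(2n / log n)`,
`∑_{d=1}^n C(n,d) c(d)^t ≤ n 2^{-3t/4}`, where `c(d) = C(d,d/2) 2^{-d}` for
even `d` and `c(d) = 0` for odd `d`.  Here `log` is the base-2 logarithm. -/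
theorem stmt_8 :
    ∃ N₀ : ℕ, ∀ n : ℕ, n ≥ N₀ →
      ∀ t : ℕ,
        (t : ℝ) ≥ (1 + 4 * Real.logb 2 (Real.logb 2 n) / Real.logb 2 n) *
              (2 * n / Real.logb 2 n) →
        ∑ d ∈ Finset.Icc 1 n, (n.choose d : ℝ) *
            (if Even d then (d.choose (d / 2) : ℝ) * (2 : ℝ) ^ (-(d : ℝ)) else 0) ^ t ≤
          (n : ℝ) * (2 : ℝ) ^ (-(3 * (t : ℝ) / 4)) := by
  obtain ⟨N, hN⟩ := eventually_ok
  refine ⟨N, fun n hn t ht => ?_⟩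
  obtain ⟨h1, h5, h8⟩ := hN n hn
  have hLpos : 0 < Real.logb 2 (n : ℝ) := by nlinarith
  have hnpos : (0 : ℝ) < n := by exact_mod_cast h1
  have htpos : t ≠ 0 := by
    rintro rfl
    have : 0 < (1 + 4 * Real.logb 2 (Real.logb 2 n) / Real.logb 2 n) *
              (2 * n / Real.logb 2 n) := by positivity
    push_cast at ht
    linarith
  have hs : ∀ d ∈ Finset.Icc 1 n, (n.choose d : ℝ) *
      (if Even d then (d.choose (d / 2) : ℝ) * (2 : ℝ) ^ (-(d : ℝ)) else 0) ^ t ≤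
      (2 : ℝ) ^ (-(3 * (t : ℝ) / 4)) := by
    intro d hd
    split_ifs with he
    · exact term_bound n d t _ _ h1 rfl rfl h5 h8 ht (Finset.mem_Icc.1 hd).1 he
    · rw [zero_pow htpos, mul_zero]
      positivity
  refine (Finset.sum_le_card_nsmul _ _ _ hs).trans (le_of_eq ?_)
  simp
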